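/- Let v be a vertex of tenacity t < l_m, where l_m is the length of a minimum length augmenting path in G. Then the set { F(p, v) : p is an evenlevel(v) or oddlevel(v) path } is a singleton; i.e., all minimum even and odd alternating paths to v share a unique 'base'. -/

import Mathlib

attribute [local instance] Classical.propDecidable

variable {V : Type*} [DecidableEq V]

namespace MV

/-- A walk is alternating (w.r.t. matching `M`) in the sense used for alternating paths
starting at an unmatched vertex: the `i`-th edge is matched iff `i` is odd. -/
def IsAlt (G : SimpleGraph V) (M : G.Subgraph) {a b : V} (w : G.Walk a b) : Prop :=
  ∀ i (h : i < w.edges.length), (w.edges.get ⟨i, h⟩ ∈ M.edgeSet ↔ Odd i)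

/-- length of a minimum even alternating path from an unmatched vertex to `v`. -/
noncomputable def evenlevel (G : SimpleGraph V) (M : G.Subgraph) (v : V) : ℕ∞ :=
  sInf {n : ℕ∞ | ∃ (f : V) (w : G.Walk f v),
    f ∉ M.verts ∧ w.IsPath ∧ IsAlt G M w ∧ Even w.length ∧ n = (w.length : ℕ∞)}

/-- length of a minimum odd alternating path from an unmatched vertex to `v`. -/
noncomputable def oddlevel (G : SimpleGraph V) (M : G.Subgraph) (v : V) : ℕ∞ :=
  sInf {n : ℕ∞ | ∃ (f : V) (w : G.Walk f v),
    f ∉ M.verts ∧ w.IsPath ∧ IsAlt G M w ∧ Odd w.length ∧ n = (w.length : ℕ∞)}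

noncomputable def tenacity (G : SimpleGraph V) (M : G.Subgraph) (v : V) : ℕ∞ :=
  evenlevel G M v + oddlevel G M v

noncomputable def minlevel (G : SimpleGraph V) (M : G.Subgraph) (v : V) : ℕ∞ :=
  min (evenlevel G M v) (oddlevel G M v)

noncomputable def maxlevel (G : SimpleGraph V) (M : G.Subgraph) (v : V) : ℕ∞ :=
  max (evenlevel G M v) (oddlevel G M v)

/-- the length of a minimum length augmenting path w.r.t. `M` (`⊤` if none exists). -/
noncomputable def lm (G : SimpleGraph V) (M : G.Subgraph) : ℕ∞ :=
  sInf {n : ℕ∞ | ∃ (f g : V) (w : G.Walk f g), f ∉ M.verts ∧ g ∉ M.verts ∧ f ≠ g ∧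
    w.IsPath ∧ IsAlt G M w ∧ Odd w.length ∧ n = (w.length : ℕ∞)}

/-- `w` is a minimum even- or odd-length alternating path from an unmatched vertex to `v`
  (an `evenlevel(v)` or `oddlevel(v)` path). -/
def IsMinPathTo (G : SimpleGraph V) (M : G.Subgraph) (v f : V) (w : G.Walk f v) : Prop :=
  f ∉ M.verts ∧ w.IsPath ∧ IsAlt G M w ∧
    ((Even w.length ∧ (w.length : ℕ∞) = evenlevel G M v) ∨
     (Odd w.length ∧ (w.length : ℕ∞) = oddlevel G M v))

/-- `b` is the vertex of tenacity greater than `tenacity v` on `w` furthest from the start. -/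
def IsFurthestHigh (G : SimpleGraph V) (M : G.Subgraph) (v : V) {f v' : V}
    (w : G.Walk f v') (b : V) : Prop :=
  ∃ hb : b ∈ w.support, tenacity G M v < tenacity G M b ∧
    ∀ u, ∀ hu : u ∈ w.support, tenacity G M v < tenacity G M u →
      (w.takeUntil u hu).length ≤ (w.takeUntil b hb).length

/-- `b` is the base of `v`: the furthest higher-tenacity vertex on every minimum
even or odd alternating path to `v`. -/
def IsBase (G : SimpleGraph V) (M : G.Subgraph) (v b : V) : Prop :=
  ∀ (f : V) (w : G.Walk f v), IsMinPathTo G M v f w → IsFurthestHigh G M v w b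

/-- minimum even length alternating path from `b` to `v` starting with an unmatched edge
  (`evenlevel(b; v)`). -/
noncomputable def evenlevelFrom (G : SimpleGraph V) (M : G.Subgraph) (b v : V) : ℕ∞ :=
  sInf {n : ℕ∞ | ∃ w : G.Walk b v,
    w.IsPath ∧ IsAlt G M w ∧ Even w.length ∧ n = (w.length : ℕ∞)}

/-- minimum odd length alternating path from `b` to `v` starting with an unmatched edge
  (`oddlevel(b; v)`). -/
noncomputable def oddlevelFrom (G : SimpleGraph V) (M : G.Subgraph) (b v : V) : ℕ∞ :=
  sInf {n : ℕ∞ | ∃ w : G.Walk b v,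
    w.IsPath ∧ IsAlt G M w ∧ Odd w.length ∧ n = (w.length : ℕ∞)}

def Outer (G : SimpleGraph V) (M : G.Subgraph) (v : V) : Prop :=
  evenlevel G M v < oddlevel G M v

/-- The blossom `B_{b,t}`, defined recursively, relative to a base function `bse`. -/
noncomputable def blossom (G : SimpleGraph V) (M : G.Subgraph) (bse : V → V) :
    ℕ → V → Set V
  | 0, _ => ∅
  | 1, _ => ∅
  | (t + 2), b =>
      {v | tenacity G M v = ((t + 2 : ℕ) : ℕ∞) ∧ bse v = b} ∪
      ⋃ v ∈ {u | (u = b ∨ (tenacity G M u = ((t + 2 : ℕ) : ℕ∞) ∧ bse u = b)) ∧ Outer G M u},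
        blossom G M bse t v

/-- The nesting depth `N(B_{b,t})`. -/
noncomputable def nestDepth (G : SimpleGraph V) (M : G.Subgraph) (bse : V → V) :
    ℕ → V → ℕ
  | 0, _ => 0
  | 1, _ => 0
  | (t + 2), b =>
      if {v | tenacity G M v = ((t + 2 : ℕ) : ℕ∞) ∧ bse v = b}.Nonempty then
        1 + sSup ((fun v => nestDepth G M bse t v) ''
          {u | (u = b ∨ (tenacity G M u = ((t + 2 : ℕ) : ℕ∞) ∧ bse u = b)) ∧ Outer G M u})
      else nestDepth G M bse t b

/-- `bse` assigns to each vertex of tenacity `< l_m` its (unique) base. -/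
def BaseFn (G : SimpleGraph V) (M : G.Subgraph) (bse : V → V) : Prop :=
  ∀ v, tenacity G M v < lm G M → IsBase G M v (bse v)

/-- `u` is a predecessor of `v`: `(u,v)` is the last edge of some `minlevel(v)` path. -/
def IsPred (G : SimpleGraph V) (M : G.Subgraph) (u v : V) : Prop :=
  ∃ (f : V) (w : G.Walk f v), f ∉ M.verts ∧ w.IsPath ∧ IsAlt G M w ∧
    (w.length : ℕ∞) = minlevel G M v ∧
    0 < w.length ∧ w.getVert (w.length - 1) = u

/-- A bridge is an edge of `G` that is not a prop. -/
def IsBridge (G : SimpleGraph V) (M : G.Subgraph) (u v : V) : Prop :=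
  G.Adj u v ∧ ¬ IsPred G M u v ∧ ¬ IsPred G M v u

/-- tenacity of an edge. -/
noncomputable def edgeTenacity (G : SimpleGraph V) (M : G.Subgraph) (u v : V) : ℕ∞ :=
  if s(u, v) ∈ M.edgeSet then oddlevel G M u + oddlevel G M v + 1
  else evenlevel G M u + evenlevel G M v + 1

/-!
A shortest alternating path `p` to `v` of either parity and one `r` of the other parity have lengths
adding up to the tenacity `t` of `v`. If `r` first meets a segment of `p` at a vertex which both
visit in positions of the same parity, `r` can be continued forwards along `p`; if the parities
differ, it can be continued backwards along `p`. The first possibility must not give a path to `v`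
that is too short, and the second must not give a vertex of tenacity greater than `t` two paths of
opposite parities and total length at most `t`.

Let `p β` be the last vertex of tenacity greater than `t` on `p`, and suppose that `r` avoids it.
Then `r` first meets the part of `p` after `p β` in equal parity, in a vertex of tenacity at most
`t`. If this tenacity is `t`, the meeting vertex has a base by induction on the level within
tenacity `t`; the base is `p β`, and `r` passes through it. If it is smaller, the meeting vertex
lies in a blossom of smaller tenacity, and by induction on `t` both paths enter this blossom through
its base `z` or leave it for good through `z`. In the first case `z` contradicts the choice of the
meeting vertex, and in the second `z` is a common vertex of tenacity `t` to which the previous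
argument applies. So `p` and `r` each contain the last high vertex of the other, and these two
vertices coincide.

To carry the induction on, one must know that a level path, unless it leaves a blossom of smaller
tenacity for good through the base in odd position, enters it only once, through its base and in
even position. For a level path to a vertex of smaller tenacity this is part of the induction
hypothesis. For `p`, the initial segment up to its last vertex in the blossom turns out to be itself
a level path: a shorter one would again splice with `p` or `r` to contradict minimality.
-/

section LastIndex

/-- `i` is the last index `≤ m` at which `P` holds. -/
structure IsLastIndex (P : ℕ → Prop) (m i : ℕ) : Prop where
  le : i ≤ m
  prop : P i
  not_of_lt : ∀ ⦃j⦄, i < j → j ≤ m → ¬ P j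

theorem exists_isLastIndex {P : ℕ → Prop} {j m : ℕ} (hjm : j ≤ m) (hj : P j) :
    ∃ i, j ≤ i ∧ IsLastIndex P m i :=
  ⟨Nat.findGreatest P m, Nat.le_findGreatest hjm hj, Nat.findGreatest_le m,
    Nat.findGreatest_spec hjm hj, fun _ ↦ Nat.findGreatest_is_greatest⟩

theorem IsLastIndex.unique {P : ℕ → Prop} {m i j : ℕ} (hi : IsLastIndex P m i)
    (hj : IsLastIndex P m j) : i = j :=
  le_antisymm (not_lt.1 fun h ↦ hj.not_of_lt h hi.le hi.prop)
    (not_lt.1 fun h ↦ hi.not_of_lt h hj.le hj.prop)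

theorem IsLastIndex.mono {P : ℕ → Prop} {m n i : ℕ} (h : IsLastIndex P m i) (hin : i ≤ n)
    (hnm : n ≤ m) : IsLastIndex P n i :=
  ⟨hin, h.prop, fun _ hij hjn ↦ h.not_of_lt hij (hjn.trans hnm)⟩

theorem IsLastIndex.lt_of_not {P : ℕ → Prop} {m i : ℕ} (h : IsLastIndex P m i) (hm : ¬ P m) :
    i < m :=
  h.le.lt_of_ne fun him ↦ hm (him ▸ h.prop)

end LastIndex

section AltPath

variable {α : Type*} {G : SimpleGraph α} {M : G.Subgraph} {a c d i j l m n : ℕ}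
  {p q s : ℕ → α} {x y u : α}

/-- The edge `xy` may occur as the `i`-th edge of an alternating path from an unmatched vertex:
the matched edges are those in odd position, counting from `0`. -/
def IsAltStep (G : SimpleGraph α) (M : G.Subgraph) (i : ℕ) (x y : α) : Prop :=
  G.Adj x y ∧ (M.Adj x y ↔ Odd i)

theorem IsAltStep.symm (h : IsAltStep G M i x y) : IsAltStep G M i y x :=
  ⟨h.1.symm, (M.adj_comm y x).trans h.2⟩

theorem IsAltStep.of_even_add (h : IsAltStep G M i x y) (hij : Even (i + j)) :
    IsAltStep G M j x y :=
  ⟨h.1, h.2.trans (by grind)⟩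

/-- `p 0, …, p n` is an alternating path from an unmatched vertex. A path is encoded as a function
on `ℕ` with irrelevant values beyond `n`, so that taking segments and reversing them is arithmetic
on indices. -/
structure IsAltPath (G : SimpleGraph α) (M : G.Subgraph) (n : ℕ) (p : ℕ → α) : Prop where
  start_notMem : p 0 ∉ M.verts
  inj : ∀ ⦃i j⦄, i ≤ n → j ≤ n → p i = p j → i = j
  step : ∀ ⦃i⦄, i < n → IsAltStep G M i (p i) (p (i + 1))

theorem IsAltPath.mono (h : IsAltPath G M n p) (hmn : m ≤ n) : IsAltPath G M m p :=
  ⟨h.start_notMem, fun _ _ hi hj ↦ h.inj (hi.trans hmn) (hj.trans hmn),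
    fun _ hi ↦ h.step (hi.trans_le hmn)⟩

theorem IsAltPath.congr (h : IsAltPath G M n p) (hpq : ∀ i ≤ n, p i = q i) : IsAltPath G M n q where
  start_notMem := hpq 0 n.zero_le ▸ h.start_notMem
  inj i j hi hj := by rw [← hpq i hi, ← hpq j hj]; exact h.inj hi hj
  step i hi := by rw [← hpq i hi.le, ← hpq (i + 1) hi]; exact h.step hi

/-- Follow `p` up to position `a` and then continue with `q`. -/
def splice (p : ℕ → α) (a : ℕ) (q : ℕ → α) : ℕ → α :=
  fun i ↦ if i < a then p i else q (i - a)

theorem splice_of_lt (h : i < a) : splice p a q i = p i := if_pos h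

theorem splice_of_le (h : a ≤ i) : splice p a q i = q (i - a) := if_neg h.not_gt

theorem splice_add : splice p a q (a + i) = q i := by
  rw [splice_of_le (Nat.le_add_right a i), Nat.add_sub_cancel_left]

theorem IsAltPath.splice (hp : IsAltPath G M a p) (hpq : p a = q 0)
    (hinj : ∀ ⦃i j⦄, i ≤ l → j ≤ l → q i = q j → i = j)
    (hstep : ∀ ⦃i⦄, i < l → IsAltStep G M (a + i) (q i) (q (i + 1)))
    (hdisj : ∀ ⦃i j⦄, i < a → j ≤ l → p i ≠ q j) : IsAltPath G M (a + l) (splice p a q) where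
  start_notMem := by
    rcases a.eq_zero_or_pos with rfl | ha
    · rw [splice_of_le le_rfl, ← hpq]
      exact hp.start_notMem
    · rw [splice_of_lt ha]
      exact hp.start_notMem
  inj i j hi hj hij := by
    rcases lt_or_ge i a with hia | hia <;> rcases lt_or_ge j a with hja | hja
    · rw [splice_of_lt hia, splice_of_lt hja] at hij
      exact hp.inj hia.le hja.le hij
    · rw [splice_of_lt hia, splice_of_le hja] at hij
      exact absurd hij (hdisj hia (by omega))
    · rw [splice_of_le hia, splice_of_lt hja] at hij
      exact absurd hij.symm (hdisj hja (by omega))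
    · rw [splice_of_le hia, splice_of_le hja] at hij
      have := hinj (by omega) (by omega) hij
      omega
  step i hi := by
    rcases lt_trichotomy (i + 1) a with hia | rfl | hia
    · rw [splice_of_lt hia, splice_of_lt (by omega)]
      exact hp.step (by omega)
    · rw [splice_of_lt (by omega), splice_of_le le_rfl, Nat.sub_self, ← hpq]
      exact hp.step (by omega)
    · obtain ⟨j, rfl⟩ := Nat.exists_eq_add_of_le (Nat.lt_succ_iff.1 hia)
      rw [add_assoc, splice_add, splice_add]
      exact hstep (by omega)

theorem IsAltPath.snoc (h : IsAltPath G M n p) (hy : ∀ i ≤ n, p i ≠ y)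
    (hstep : IsAltStep G M n (p n) y) :
    IsAltPath G M (n + 1) (Function.update p (n + 1) y) where
  start_notMem := by
    rw [Function.update_of_ne (by omega)]
    exact h.start_notMem
  inj i j hi hj hij := by
    grind [h.inj (i := i) (j := j), Function.update_apply]
  step i hi := by
    rw [Function.update_of_ne (by omega)]
    rcases Nat.lt_succ_iff_lt_or_eq.1 hi with hin | rfl
    · rw [Function.update_of_ne (by omega)]
      exact h.step hin
    · rw [Function.update_self]
      exact hstep

/-- Along `s`, the first vertex on the segment `p d, …, p m` is `s a = p c`. -/
structure MeetsFirst (s p : ℕ → α) (d m a c : ℕ) : Prop where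
  le_left : d ≤ c
  le_right : c ≤ m
  eq : s a = p c
  ne : ∀ ⦃i j⦄, i < a → d ≤ j → j ≤ m → s i ≠ p j

theorem exists_meetsFirst (hdj : d ≤ j) (hjm : j ≤ m) (hij : s i = p j) :
    ∃ a ≤ i, ∃ c, MeetsFirst s p d m a c := by
  have hex : ∃ a c, d ≤ c ∧ c ≤ m ∧ s a = p c := ⟨i, j, hdj, hjm, hij⟩
  obtain ⟨c, hdc, hcm, hac⟩ := Nat.find_spec hex
  exact ⟨Nat.find hex, Nat.find_min' hex ⟨j, hdj, hjm, hij⟩, c, hdc, hcm, hac,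
    fun _ _ hlt hd hm heq ↦ Nat.find_min hex hlt ⟨_, hd, hm, heq⟩⟩

theorem IsAltPath.splice_forward (hs : IsAltPath G M a s) (hp : IsAltPath G M m p)
    (h : MeetsFirst s p d m a c) (hac : Even (a + c)) :
    IsAltPath G M (a + (m - c)) (MV.splice s a fun j ↦ p (c + j)) := by
  have hcm := h.le_right
  refine hs.splice h.eq (fun i j hi hj hij ↦ ?_) (fun j hj ↦ ?_) fun i j hi hj ↦ ?_
  · have := hp.inj (by omega) (by omega) hij
    omega
  · exact (hp.step (i := c + j) (by omega)).of_even_add (by grind)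
  · exact h.ne hi (h.le_left.trans (Nat.le_add_right c j)) (by omega)

theorem IsAltPath.splice_backward (hs : IsAltPath G M a s) (hp : IsAltPath G M m p)
    (h : MeetsFirst s p d m a c) (hac : Odd (a + c)) :
    IsAltPath G M (a + (c - d)) (MV.splice s a fun j ↦ p (c - j)) := by
  have hdc := h.le_left
  have hcm := h.le_right
  refine hs.splice h.eq (fun i j hi hj hij ↦ ?_) (fun j hj ↦ ?_) fun i j hi hj ↦ ?_
  · have := hp.inj (by omega) (by omega) hij
    omega
  · have hstep := (hp.step (i := c - (j + 1)) (by omega)).symm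
    rw [show c - (j + 1) + 1 = c - j by omega] at hstep
    exact hstep.of_even_add (by grind)
  · exact h.ne hi (by omega) (by omega)

theorem IsAltPath.prev_eq_of_adj (hM : M.IsMatching) (h : IsAltPath G M n p) (hn : Even n)
    (hu : M.Adj (p n) u) : 0 < n ∧ p (n - 1) = u := by
  have hpos : 0 < n := Nat.pos_of_ne_zero fun h0 ↦ h.start_notMem (h0 ▸ M.edge_vert hu)
  have hstep := (h.step (Nat.sub_one_lt hpos.ne')).symm
  rw [Nat.sub_add_cancel hpos] at hstep
  exact ⟨hpos, hM.eq_of_adj_left (hstep.2.2 (by grind)) hu⟩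

theorem IsAltPath.snoc_of_adj (hM : M.IsMatching) (h : IsAltPath G M n p) (hn : Odd n)
    (hu : M.Adj (p n) u) : IsAltPath G M (n + 1) (Function.update p (n + 1) u) := by
  refine h.snoc (fun j hj hju ↦ ?_) ⟨M.adj_sub hu, iff_of_true hu hn⟩
  subst hju
  rcases Nat.even_or_odd j with hj_even | hj_odd
  · obtain ⟨_, hprev⟩ := (h.mono hj).prev_eq_of_adj hM hj_even hu.symm
    have := h.inj (by omega) le_rfl hprev
    omega
  · have hjn : j < n := hj.lt_of_ne fun hjn ↦ hu.ne (congrArg p hjn).symm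
    have hnext := hM.eq_of_adj_left ((h.step hjn).2.2 hj_odd) hu.symm
    have := h.inj hjn le_rfl hnext
    grind

end AltPath

section Walk

variable {α : Type*} {G : SimpleGraph α} {M : G.Subgraph} {n : ℕ} {p : ℕ → α} {f v : α}

theorem isAlt_iff_forall_getVert {w : G.Walk f v} :
    IsAlt G M w ↔ ∀ i < w.length, (M.Adj (w.getVert i) (w.getVert (i + 1)) ↔ Odd i) := by
  simp [IsAlt, SimpleGraph.Walk.edges, SimpleGraph.Walk.darts_getElem_eq_getVert]

theorem isAltPath_getVert_iff {w : G.Walk f v} :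
    IsAltPath G M w.length w.getVert ↔ f ∉ M.verts ∧ w.IsPath ∧ IsAlt G M w := by
  rw [← SimpleGraph.Walk.IsPath.getVert_injOn_iff, isAlt_iff_forall_getVert]
  refine ⟨fun h ↦ ⟨w.getVert_zero ▸ h.start_notMem, fun i hi j hj ↦ h.inj hi hj,
    fun i hi ↦ (h.step hi).2⟩, fun ⟨hf, hinj, halt⟩ ↦ ⟨w.getVert_zero.symm ▸ hf,
    fun i j hi hj ↦ hinj hi hj, fun i hi ↦ ⟨w.adj_getVert_succ hi, halt i hi⟩⟩⟩

theorem exists_walk_getVert_eq (hp : ∀ i < n, G.Adj (p i) (p (i + 1))) :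
    ∃ w : G.Walk (p 0) (p n), w.length = n ∧ ∀ i ≤ n, w.getVert i = p i := by
  induction n generalizing p with
  | zero => exact ⟨.nil, rfl, fun i hi ↦ by rw [Nat.le_zero.1 hi, SimpleGraph.Walk.getVert_zero]⟩
  | succ n ih =>
    obtain ⟨w, hlen, hw⟩ := ih (p := fun i ↦ p (i + 1)) fun i hi ↦ hp (i + 1) (by omega)
    refine ⟨.cons (hp 0 n.succ_pos) w, by rw [SimpleGraph.Walk.length_cons, hlen], fun i hi ↦ ?_⟩
    cases i with
    | zero => rfl
    | succ i => exact hw i (Nat.le_of_succ_le_succ hi)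

theorem IsAltPath.exists_walk (h : IsAltPath G M n p) :
    ∃ w : G.Walk (p 0) (p n), w.IsPath ∧ IsAlt G M w ∧ w.length = n ∧
      ∀ i ≤ n, w.getVert i = p i := by
  obtain ⟨w, hlen, hw⟩ := exists_walk_getVert_eq fun i hi ↦ (h.step (i := i) hi).1
  have hwalt : IsAltPath G M w.length w.getVert := by
    rw [hlen]
    exact h.congr fun i hi ↦ (hw i hi).symm
  obtain ⟨-, hpath, halt⟩ := isAltPath_getVert_iff.1 hwalt
  exact ⟨w, hpath, halt, hlen, hw⟩

end Walk

section Level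

variable {α : Type*} {G : SimpleGraph α} {M : G.Subgraph} {a c d i k l m n t : ℕ}
  {p q r s : ℕ → α} {u v : α}

/-- The least length of an alternating path from an unmatched vertex to `v` among the lengths of
the same parity as `n`. It treats `evenlevel` (`n = 0`) and `oddlevel` (`n = 1`) uniformly. -/
noncomputable def level (G : SimpleGraph α) (M : G.Subgraph) (n : ℕ) (v : α) : ℕ∞ :=
  sInf {k : ℕ∞ | ∃ (m : ℕ) (p : ℕ → α), IsAltPath G M m p ∧ p m = v ∧ Even (m + n) ∧ k = m}

theorem exists_walk_iff_exists_isAltPath {P : ℕ → Prop} {k : ℕ∞} :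
    (∃ (f : α) (w : G.Walk f v), f ∉ M.verts ∧ w.IsPath ∧ IsAlt G M w ∧ P w.length ∧
        k = (w.length : ℕ∞)) ↔
      ∃ (m : ℕ) (p : ℕ → α), IsAltPath G M m p ∧ p m = v ∧ P m ∧ k = m := by
  constructor
  · rintro ⟨f, w, hf, hw, halt, hP, hk⟩
    exact ⟨_, _, isAltPath_getVert_iff.2 ⟨hf, hw, halt⟩, w.getVert_length, hP, hk⟩
  · rintro ⟨m, p, hp, rfl, hP, hk⟩
    obtain ⟨w, hw, halt, hlen, -⟩ := hp.exists_walk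
    exact ⟨p 0, w, hp.start_notMem, hw, halt, by rwa [hlen], by rwa [hlen]⟩

theorem evenlevel_eq_level (hn : Even n) : evenlevel G M v = level G M n v := by
  simp only [evenlevel, level, exists_walk_iff_exists_isAltPath, Nat.even_add, hn, iff_true]

theorem oddlevel_eq_level (hn : Odd n) : oddlevel G M v = level G M n v := by
  simp only [oddlevel, level, exists_walk_iff_exists_isAltPath, Nat.even_add', hn, iff_true]

theorem tenacity_eq_level_add_level (hmn : Odd (m + n)) :
    tenacity G M v = level G M m v + level G M n v := by
  rcases Nat.even_or_odd m with hm | hm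
  · rw [tenacity, evenlevel_eq_level hm, oddlevel_eq_level (n := n) (by grind)]
  · rw [tenacity, oddlevel_eq_level hm, evenlevel_eq_level (n := n) (by grind), add_comm]

theorem IsAltPath.level_le (hp : IsAltPath G M m p) (hmn : Even (m + n)) :
    level G M n (p m) ≤ m :=
  sInf_le ⟨m, p, hp, rfl, hmn, rfl⟩

theorem IsAltPath.tenacity_le (hp : IsAltPath G M m p) (hq : IsAltPath G M n q)
    (hpq : p m = q n) (hmn : Odd (m + n)) : tenacity G M (p m) ≤ (m + n : ℕ) := by
  rw [tenacity_eq_level_add_level hmn, Nat.cast_add]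
  exact add_le_add (hp.level_le (Even.add_self m)) (hpq ▸ hq.level_le (Even.add_self n))

/-- `p` is an `evenlevel(v)` or an `oddlevel(v)` path of length `n`: it is a shortest alternating
path to `v` of its parity. -/
structure IsLevelPath (G : SimpleGraph α) (M : G.Subgraph) (n : ℕ) (p : ℕ → α) (v : α) : Prop
    extends IsAltPath G M n p where
  apply_length : p n = v
  level_eq : level G M n v = n

theorem level_congr (hmn : Even (m + n)) : level G M m v = level G M n v := by
  have hpar (k : ℕ) : Even (k + m) ↔ Even (k + n) := by grind
  simp only [level, hpar]

theorem IsLevelPath.length_le (hp : IsLevelPath G M n p v) (hq : IsAltPath G M m q)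
    (hqv : q m = v) (hmn : Even (m + n)) : n ≤ m := by
  have hle : level G M n v ≤ m := hqv ▸ hq.level_le hmn
  rw [hp.level_eq] at hle
  exact_mod_cast hle

theorem IsLevelPath.length_eq (hp : IsLevelPath G M m p v) (hq : IsLevelPath G M n q v)
    (hmn : Even (m + n)) : m = n :=
  le_antisymm (hp.length_le hq.toIsAltPath hq.apply_length (by grind))
    (hq.length_le hp.toIsAltPath hp.apply_length hmn)

theorem IsLevelPath.congr (hp : IsLevelPath G M n p v) (hpq : ∀ i ≤ n, p i = q i) :
    IsLevelPath G M n q v :=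
  ⟨hp.toIsAltPath.congr hpq, (hpq n le_rfl).symm.trans hp.apply_length, hp.level_eq⟩

theorem sInf_mem_of_ne_top {S : Set ℕ∞} (h : sInf S ≠ ⊤) : sInf S ∈ S :=
  csInf_mem (Set.nonempty_iff_ne_empty.2 fun he ↦ h (by rw [he, sInf_empty]))

theorem exists_isLevelPath_of_level_ne_top (h : level G M n v ≠ ⊤) :
    ∃ k p, IsLevelPath G M k p v ∧ Even (k + n) := by
  obtain ⟨k, p, hp, hpk, hkn, hk⟩ := sInf_mem_of_ne_top h
  exact ⟨k, p, ⟨hp, hpk, (level_congr hkn).trans hk⟩, hkn⟩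

theorem IsAltPath.exists_isLevelPath (hp : IsAltPath G M n p) :
    ∃ k ≤ n, ∃ q, IsLevelPath G M k q (p n) ∧ Even (k + n) := by
  have hle := hp.level_le (Even.add_self n)
  obtain ⟨k, q, hq, hkn⟩ :=
    exists_isLevelPath_of_level_ne_top (ne_top_of_le_ne_top (ENat.natCast_ne_top n) hle)
  exact ⟨k, hq.length_le hp rfl (by grind), q, hq, hkn⟩

theorem IsLevelPath.tenacity_eq (hp : IsLevelPath G M m p v) (hq : IsLevelPath G M n q v)
    (hmn : Odd (m + n)) : tenacity G M v = (m + n : ℕ) := by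
  rw [tenacity_eq_level_add_level hmn, hp.level_eq, hq.level_eq, Nat.cast_add]

theorem IsLevelPath.add_eq (hv : tenacity G M v = t) (hp : IsLevelPath G M m p v)
    (hq : IsLevelPath G M n q v) (hmn : Odd (m + n)) : m + n = t := by
  rw [hp.tenacity_eq hq hmn, Nat.cast_inj] at hv
  exact hv

theorem exists_isLevelPath (h : tenacity G M v ≠ ⊤) (n : ℕ) :
    ∃ k p, IsLevelPath G M k p v ∧ Even (k + n) := by
  refine exists_isLevelPath_of_level_ne_top fun htop ↦ h ?_
  rw [tenacity_eq_level_add_level (m := n) (n := n + 1) (by grind), htop, top_add]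

theorem IsLevelPath.exists_add_eq_tenacity (hp : IsLevelPath G M m p v)
    (hv : tenacity G M v ≠ ⊤) :
    ∃ n q, IsLevelPath G M n q v ∧ Odd (m + n) ∧ tenacity G M v = (m + n : ℕ) := by
  obtain ⟨n, q, hq, hnm⟩ := exists_isLevelPath hv (m + 1)
  have hmn : Odd (m + n) := by grind
  exact ⟨n, q, hq, hmn, hp.tenacity_eq hq hmn⟩

/-- Following `s` to the segment `p d, …, p m` and then `p` backwards reaches `p d` with the parity
opposite to that of `d`. -/
theorem MeetsFirst.tenacity_le (h : MeetsFirst s p d m a c) (hs : IsAltPath G M a s)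
    (hp : IsAltPath G M m p) (hac : Odd (a + c)) (hq : IsAltPath G M k q) (hqd : q k = p d)
    (hkd : Even (k + d)) : tenacity G M (p d) ≤ (k + (a + (c - d)) : ℕ) := by
  have hdc := h.le_left
  rw [← hqd]
  refine hq.tenacity_le (hs.splice_backward hp h hac) ?_ (by grind)
  rw [splice_add, Nat.sub_sub_self hdc, hqd]

theorem MeetsFirst.odd_add_of_lt (h : MeetsFirst s p d m a c) (hs : IsAltPath G M a s)
    (hp : IsLevelPath G M m p v) (hac : a < c) : Odd (a + c) := by
  by_contra hodd
  rw [Nat.not_odd_iff_even] at hodd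
  have hcm := h.le_right
  have hle := hp.length_le (hs.splice_forward hp.toIsAltPath h hodd)
    (by rw [splice_add, Nat.add_sub_cancel' hcm, hp.apply_length]) (by grind)
  omega

/-- A shorter path to `p i` of the same parity, or a level path to `v` of the other parity if that
is shorter than `i`, would first meet `p i, …, p m` so early that following `p` from there forwards
gives too short a path to `v`, or backwards too small a tenacity of `p i`. -/
theorem IsLevelPath.isLevelPath_apply (hp : IsLevelPath G M m p v) (hv : tenacity G M v ≠ ⊤)
    (hi : i ≤ m) (hu : tenacity G M v ≤ tenacity G M (p i)) : IsLevelPath G M i p (p i) := by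
  have hpi := hp.toIsAltPath.mono hi
  obtain ⟨k, hki, q, hq, hpar⟩ := hpi.exists_isLevelPath
  suffices hik : i ≤ k by
    obtain rfl := le_antisymm hki hik
    exact ⟨hpi, rfl, hq.level_eq⟩
  by_contra! hlt
  obtain ⟨n, r, hr, -, htv⟩ := hp.exists_add_eq_tenacity hv
  have not_meets {s b j} (hs : IsAltPath G M b s) (hbi : b < i) (hbn : b ≤ n) (hij : i ≤ j)
      (hjm : j ≤ m) : s b ≠ p j := by
    intro hsp
    obtain ⟨a, hab, c, hmeet⟩ := exists_meetsFirst hij hjm hsp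
    have hic := hmeet.le_left
    have hcm := hmeet.le_right
    have hsa := hs.mono hab
    have hodd := hmeet.odd_add_of_lt hsa hp (by omega)
    have hle := hu.trans (hmeet.tenacity_le hsa hp.toIsAltPath hodd hq.toIsAltPath hq.apply_length
      hpar)
    rw [htv, Nat.cast_le] at hle
    omega
  rcases lt_or_ge n i with hni | hin
  · exact not_meets hr.toIsAltPath hni le_rfl hi le_rfl (hr.apply_length.trans hp.apply_length.symm)
  · exact not_meets hq.toIsAltPath hlt (by omega) le_rfl hi hq.apply_length

theorem IsLevelPath.eq_of_apply_eq (hv : tenacity G M v = t) (hp : IsLevelPath G M m p v)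
    (hr : IsLevelPath G M n r v) (hmnt : m + n = t) (him : i ≤ m) (hln : l ≤ n)
    (hli : r l = p i) (hi : t < tenacity G M (p i)) : i = l := by
  have hv_ne_top : tenacity G M v ≠ ⊤ := hv ▸ ENat.natCast_ne_top t
  have hpi := hp.isLevelPath_apply hv_ne_top him (hv.trans_le hi.le)
  have hrl := hr.isLevelPath_apply hv_ne_top hln (hli ▸ hv.trans_le hi.le)
  rw [hli] at hrl
  refine hpi.length_eq hrl ?_
  by_contra hodd
  rw [hpi.tenacity_eq hrl (Nat.not_even_iff_odd.1 hodd), Nat.cast_lt] at hi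
  omega

theorem tenacity_le_of_adj (hM : M.IsMatching) (huv : M.Adj u v) :
    tenacity G M u ≤ tenacity G M v := by
  by_cases hv : tenacity G M v = ⊤
  · rw [hv]
    exact le_top
  obtain ⟨m, p, hp, hm⟩ := exists_isLevelPath hv 0
  obtain ⟨n, q, hq, hn⟩ := exists_isLevelPath hv 1
  obtain ⟨hpos, hpu⟩ :=
    hp.toIsAltPath.prev_eq_of_adj hM (by grind) (hp.apply_length.symm ▸ huv.symm)
  have hqu := hq.toIsAltPath.snoc_of_adj hM (by grind) (hq.apply_length.symm ▸ huv.symm)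
  have hle := (hp.toIsAltPath.mono (Nat.sub_le m 1)).tenacity_le hqu
    (by rw [hpu, Function.update_self]) (by grind)
  rw [hp.tenacity_eq hq (by grind), ← hpu]
  exact hle.trans_eq (congrArg Nat.cast (by omega))

theorem tenacity_eq_of_adj (hM : M.IsMatching) (huv : M.Adj u v) :
    tenacity G M u = tenacity G M v :=
  (tenacity_le_of_adj hM huv).antisymm (tenacity_le_of_adj hM huv.symm)

theorem lm_le_tenacity (hv : v ∉ M.verts) : lm G M ≤ tenacity G M v := by
  refine le_trans (le_sInf ?_) (le_add_self : oddlevel G M v ≤ _)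
  rintro _ ⟨f, w, hf, hw, halt, hodd, rfl⟩
  refine sInf_le ⟨f, v, w, hf, hv, ?_, hw, halt, hodd, rfl⟩
  rintro rfl
  simp [SimpleGraph.Walk.length_eq_zero_iff.2 (SimpleGraph.Walk.isPath_iff_nil.1 hw)] at hodd

end Level

section High

variable {α : Type*} {G : SimpleGraph α} {M : G.Subgraph} {a c m n t β : ℕ}
  {p r : ℕ → α} {f v : α} {τ : ℕ∞}

/-- `p β` is the last vertex of tenacity greater than `τ` on the path `p 0, …, p m`. This is
`F(p, v)` when `p` is a level path to `v` and `τ` is the tenacity of `v`. -/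
def IsLastHigh (G : SimpleGraph α) (M : G.Subgraph) (τ : ℕ∞) (m : ℕ) (p : ℕ → α) (β : ℕ) : Prop :=
  IsLastIndex (fun j ↦ τ < tenacity G M (p j)) m β

theorem exists_isLastHigh (hτ : τ < lm G M) (hp : IsAltPath G M m p) :
    ∃ β, IsLastHigh G M τ m p β :=
  (exists_isLastIndex m.zero_le (hτ.trans_le (lm_le_tenacity hp.start_notMem))).imp
    fun _ ↦ And.right

theorem IsLastHigh.tenacity_le (h : IsLastHigh G M τ m p β) {j : ℕ} (hβj : β < j) (hjm : j ≤ m) :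
    tenacity G M (p j) ≤ τ :=
  not_lt.1 (h.not_of_lt hβj hjm)

theorem IsLastHigh.lt (h : IsLastHigh G M τ m p β) (hm : tenacity G M (p m) ≤ τ) : β < m :=
  h.lt_of_not hm.not_gt

theorem IsLastHigh.even (hM : M.IsMatching) (h : IsLastHigh G M τ m p β)
    (hp : IsAltPath G M m p) (hβ : β < m) : Even β := by
  by_contra hodd
  rw [Nat.not_even_iff_odd] at hodd
  have hmate := tenacity_eq_of_adj hM ((hp.step hβ).2.2 hodd)
  exact (h.tenacity_le β.lt_succ_self hβ).not_gt (hmate ▸ h.prop)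

theorem isMinPathTo_iff {w : G.Walk f v} :
    IsMinPathTo G M v f w ↔ IsLevelPath G M w.length w.getVert v := by
  have hlevel : (Even w.length ∧ (w.length : ℕ∞) = evenlevel G M v ∨
      Odd w.length ∧ (w.length : ℕ∞) = oddlevel G M v) ↔ level G M w.length v = w.length := by
    rcases Nat.even_or_odd w.length with h | h
    · simp [h, Nat.not_odd_iff_even.2 h, evenlevel_eq_level h, eq_comm]
    · simp [h, Nat.not_even_iff_odd.2 h, oddlevel_eq_level h, eq_comm]
  rw [IsMinPathTo, hlevel]
  refine ⟨fun ⟨hf, hw, halt, hlen⟩ ↦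
    ⟨isAltPath_getVert_iff.2 ⟨hf, hw, halt⟩, w.getVert_length, hlen⟩, fun h ↦ ?_⟩
  obtain ⟨hf, hw, halt⟩ := isAltPath_getVert_iff.1 h.toIsAltPath
  exact ⟨hf, hw, halt, h.level_eq⟩

theorem IsLastHigh.even_add_of_meetsFirst (hβ : IsLastHigh G M t m p β) (hp : IsAltPath G M m p)
    (hr : IsAltPath G M n r) (hmn : m + n = t) (han : a ≤ n)
    (hmeet : MeetsFirst r p (β + 1) m a c) (hno : ∀ γ ≤ n, r γ ≠ p β) : Even (a + c) := by
  by_contra hodd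
  rw [Nat.not_even_iff_odd] at hodd
  have hβc := hmeet.le_left
  have hcm := hmeet.le_right
  have hmeet' : MeetsFirst r p β m a c := by
    refine ⟨by omega, hcm, hmeet.eq, fun x y hx hβy hym ↦ ?_⟩
    rcases hβy.eq_or_lt with rfl | hβy
    · exact hno x (by omega)
    · exact hmeet.ne hx hβy hym
  have hlt := hβ.prop.trans_le <| hmeet'.tenacity_le (hr.mono han) hp hodd (hp.mono hβ.le) rfl
    (Even.add_self β)
  rw [Nat.cast_lt] at hlt
  omega

end High

section Base

variable {G : SimpleGraph V} {M : G.Subgraph} {m n β : ℕ} {p : ℕ → V} {b f u v : V}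

theorem length_takeUntil_eq {w : G.Walk u v} (hw : w.IsPath) (hn : n ≤ w.length)
    (h : w.getVert n ∈ w.support) : (w.takeUntil (w.getVert n) h).length = n :=
  hw.getVert_injOn (w.length_takeUntil_le_length h) hn (SimpleGraph.Walk.getVert_length_takeUntil h)

theorem isFurthestHigh_iff {w : G.Walk f u} (hw : w.IsPath) :
    IsFurthestHigh G M v w b ↔
      ∃ β, IsLastHigh G M (tenacity G M v) w.length w.getVert β ∧ w.getVert β = b := by
  constructor
  · rintro ⟨hb, hvb, hlast⟩
    have hβ := SimpleGraph.Walk.getVert_length_takeUntil hb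
    refine ⟨_, ⟨w.length_takeUntil_le_length hb, hβ.symm ▸ hvb, fun j hlt hj hvj ↦ ?_⟩, hβ⟩
    have hle := hlast _ (w.getVert_mem_support j) hvj
    rw [length_takeUntil_eq hw hj] at hle
    exact hle.not_gt hlt
  · rintro ⟨β, hβ, rfl⟩
    refine ⟨w.getVert_mem_support β, hβ.prop, fun x hx hvx ↦ ?_⟩
    rw [length_takeUntil_eq hw hβ.le]
    by_contra! hlt
    refine hβ.not_of_lt hlt (w.length_takeUntil_le_length hx) ?_
    rwa [SimpleGraph.Walk.getVert_length_takeUntil hx]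

theorem isBase_iff :
    IsBase G M v b ↔ ∀ m p, IsLevelPath G M m p v →
      ∃ β, IsLastHigh G M (tenacity G M v) m p β ∧ p β = b := by
  constructor
  · rintro h m p hp
    obtain rfl := hp.apply_length
    obtain ⟨w, hw, -, hlen, hwp⟩ := hp.exists_walk
    have hmin : IsMinPathTo G M (p m) (p 0) w := by
      rw [isMinPathTo_iff, hlen]
      exact hp.congr fun i hi ↦ (hwp i hi).symm
    obtain ⟨β, hβ, rfl⟩ := (isFurthestHigh_iff hw).1 (h _ w hmin)
    rw [hlen] at hβ
    refine ⟨β, ⟨hβ.le, hwp β hβ.le ▸ hβ.prop, fun j hlt hj ↦ ?_⟩, (hwp β hβ.le).symm⟩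
    rw [← hwp j hj]
    exact hβ.not_of_lt hlt hj
  · intro h f w hw
    exact (isFurthestHigh_iff hw.2.1).2 (h _ _ (isMinPathTo_iff.1 hw))

theorem IsBase.apply_eq (hb : IsBase G M v b) (hp : IsLevelPath G M m p v)
    (hβ : IsLastHigh G M (tenacity G M v) m p β) : p β = b := by
  obtain ⟨γ, hγ, rfl⟩ := isBase_iff.1 hb m p hp
  rw [hβ.unique hγ]

end Base

section IterBase

variable {G : SimpleGraph V} {M : G.Subgraph} {j k n s t ζ : ℕ} {e p : ℕ → V}
  {u v x z : V}

/-- `z` is obtained from `u` by passing to the base as long as the tenacity is less than `t`.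
The vertices `u ≠ z` with this property are those of the blossoms of tenacity less than `t` with
base `z`. -/
inductive IsIterBase (G : SimpleGraph V) (M : G.Subgraph) (t : ℕ) (z : V) : V → Prop
  | refl : (t : ℕ∞) ≤ tenacity G M z → IsIterBase G M t z z
  | step {u b : V} : tenacity G M u < t → IsBase G M u b → IsIterBase G M t z b →
      IsIterBase G M t z u

/-- The part of the theory of blossoms at tenacity `s` that the induction on tenacity carries:
bases exist, and between the base and its end a level path only visits the blossom of that base. -/
structure BlossomProperty (G : SimpleGraph V) (M : G.Subgraph) (s : ℕ) : Prop where
  exists_isBase : ∀ v, tenacity G M v = s → ∃ b, IsBase G M v b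
  isIterBase : ∀ ⦃v m p β⦄, tenacity G M v = s → IsLevelPath G M m p v →
    IsLastHigh G M s m p β → ∀ ⦃j⦄, β ≤ j → j ≤ m → IsIterBase G M (s + 1) (p β) (p j)

/-- The path `e` reaches `z` along a level path of even length `ζ`, and from there up to position
`k` it stays among the vertices with iterated base `z`. -/
structure EntersAt (G : SimpleGraph V) (M : G.Subgraph) (t : ℕ) (z : V) (k : ℕ) (e : ℕ → V)
    (ζ : ℕ) : Prop where
  le : ζ ≤ k
  even : Even ζ
  isLevelPath : IsLevelPath G M ζ e z
  isIterBase : ∀ ⦃j⦄, ζ ≤ j → j ≤ k → IsIterBase G M t z (e j)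

theorem IsIterBase.le_tenacity (h : IsIterBase G M t z u) : (t : ℕ∞) ≤ tenacity G M z := by
  induction h with
  | refl h => exact h
  | step _ _ _ ih => exact ih

theorem IsIterBase.tenacity_lt (h : IsIterBase G M t z u) (hu : u ≠ z) : tenacity G M u < t := by
  cases h with
  | refl => exact absurd rfl hu
  | step h => exact h

theorem IsIterBase.eq_of_le_tenacity (h : IsIterBase G M t z u) (hu : (t : ℕ∞) ≤ tenacity G M u) :
    u = z :=
  by_contra fun hne ↦ (h.tenacity_lt hne).not_ge hu

theorem IsIterBase.trans (h : IsIterBase G M s x u) (hst : s ≤ t) (hx : IsIterBase G M t z x) :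
    IsIterBase G M t z u := by
  induction h with
  | refl => exact hx
  | step hu hb _ ih => exact .step (hu.trans_le (by exact_mod_cast hst)) hb ih

theorem IsIterBase.exists_entersAt (hM : M.IsMatching) (hG : ∀ s < t, BlossomProperty G M s)
    (h : IsIterBase G M t z u) (he : IsLevelPath G M k e u) (hor : u ≠ z ∨ Even k) :
    ∃ ζ, EntersAt G M t z k e ζ := by
  induction h generalizing k with
  | refl hz =>
    refine ⟨k, le_rfl, hor.neg_resolve_left rfl, he, fun j hkj hjk ↦ ?_⟩
    rw [le_antisymm hjk hkj, he.apply_length]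
    exact .refl hz
  | @step u b hu hb hbz ih =>
    obtain ⟨s, hs⟩ := ENat.ne_top_iff_exists.1 hu.ne_top
    have hst : s < t := by rwa [← hs, Nat.cast_lt] at hu
    obtain ⟨β, hβ, rfl⟩ := isBase_iff.1 hb k e he
    have hβk : β < k := hβ.lt (he.apply_length ▸ le_rfl)
    have hinit := he.isLevelPath_apply hu.ne_top hβ.le hβ.prop.le
    obtain ⟨ζ, hζ⟩ := ih hinit (Or.inr (hβ.even hM he.toIsAltPath hβk))
    refine ⟨ζ, hζ.le.trans hβ.le, hζ.even, hζ.isLevelPath, fun j hζj hjk ↦ ?_⟩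
    rcases le_total j β with hjβ | hβj
    · exact hζ.isIterBase hζj hjβ
    · rw [← hs] at hβ
      exact ((hG s hst).isIterBase hs.symm he hβ hβj hjk).trans hst hbz

theorem IsIterBase.exists_isLevelPath_lt (hM : M.IsMatching)
    (hG : ∀ s < t, BlossomProperty G M s) (h : IsIterBase G M t z (e k)) (hne : e k ≠ z)
    (he : IsAltPath G M k e) : ∃ ζ < k, ∃ q, IsLevelPath G M ζ q z ∧ Even ζ := by
  obtain ⟨l, hlk, q, hq, -⟩ := he.exists_isLevelPath
  obtain ⟨ζ, hζ⟩ := h.exists_entersAt hM hG hq (Or.inl hne)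
  refine ⟨ζ, (hζ.le.lt_of_ne ?_).trans_le hlk, q, hζ.isLevelPath, hζ.even⟩
  rintro rfl
  exact hne (hq.apply_length.symm.trans hζ.isLevelPath.apply_length)

theorem EntersAt.le_of_isIterBase (hM : M.IsMatching) (hG : ∀ s < t, BlossomProperty G M s)
    (h : EntersAt G M t z k e ζ) (he : IsAltPath G M k e) (hj : j ≤ k)
    (hjz : IsIterBase G M t z (e j)) : ζ ≤ j := by
  by_cases hne : e j = z
  · exact (he.inj h.le hj (h.isLevelPath.apply_length.trans hne.symm)).le
  · obtain ⟨ζ', hζ', q, hq, heven⟩ := hjz.exists_isLevelPath_lt hM hG hne (he.mono hj)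
    exact (h.isLevelPath.length_eq hq (h.even.add heven)).trans_le hζ'.le

theorem EntersAt.le_of_le_tenacity (h : EntersAt G M t z k e ζ) (he : IsAltPath G M k e)
    (hj : j ≤ k) (ht : (t : ℕ∞) ≤ tenacity G M (e j)) : j ≤ ζ := by
  by_contra! hlt
  have hez := (h.isIterBase hlt.le hj).eq_of_le_tenacity ht
  have := he.inj hj h.le (hez.trans h.isLevelPath.apply_length.symm)
  omega

theorem IsIterBase.of_adj (hM : M.IsMatching) (hG : ∀ s < t, BlossomProperty G M s)
    (h : IsIterBase G M t z u) (hne : u ≠ z) (huv : M.Adj u v) : IsIterBase G M t z v := by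
  obtain ⟨m, p, hp, hm⟩ := exists_isLevelPath (h.tenacity_lt hne).ne_top 0
  obtain ⟨ζ, hζ⟩ := h.exists_entersAt hM hG hp (Or.inl hne)
  obtain ⟨hpos, rfl⟩ :=
    hp.toIsAltPath.prev_eq_of_adj hM (by grind) (hp.apply_length.symm ▸ huv)
  have hζm : ζ ≠ m := by
    rintro rfl
    exact hne (hp.apply_length.symm.trans hζ.isLevelPath.apply_length)
  have := hζ.le
  exact hζ.isIterBase (by omega) (by omega)

theorem exists_isIterBase (hG : ∀ s < t, BlossomProperty G M s) (hp : IsAltPath G M n p) :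
    ∃ z, IsIterBase G M t z (p n) := by
  induction n using Nat.strong_induction_on generalizing p with
  | _ n ih =>
    rcases le_or_gt (t : ℕ∞) (tenacity G M (p n)) with ht | hlt
    · exact ⟨p n, .refl ht⟩
    obtain ⟨s, hs⟩ := ENat.ne_top_iff_exists.1 hlt.ne_top
    have hst : s < t := by rwa [← hs, Nat.cast_lt] at hlt
    obtain ⟨b, hb⟩ := (hG s hst).exists_isBase _ hs.symm
    obtain ⟨k, hkn, q, hq, -⟩ := hp.exists_isLevelPath
    obtain ⟨β, hβ, rfl⟩ := isBase_iff.1 hb k q hq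
    have hβk : β < k := hβ.lt (hq.apply_length ▸ le_rfl)
    obtain ⟨z, hz⟩ := ih β (hβk.trans_le hkn) (hq.toIsAltPath.mono hβ.le)
    exact ⟨z, .step hlt hb hz⟩

theorem not_isIterBase_of_tenacity_eq (hv : tenacity G M v = t) (hz : z ≠ v) :
    ¬ IsIterBase G M t z v :=
  fun h ↦ hz (h.eq_of_le_tenacity hv.ge).symm

end IterBase

section LastIterBase

variable {G : SimpleGraph V} {M : G.Subgraph} {a c i j k m n t ζ : ℕ}
  {e p r s : ℕ → V} {v z : V}

/-- `p i` is the last vertex with iterated base `z` on the path `p 0, …, p m`. -/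
def IsLastIterBase (G : SimpleGraph V) (M : G.Subgraph) (t : ℕ) (z : V) (m : ℕ) (p : ℕ → V)
    (i : ℕ) : Prop :=
  IsLastIndex (fun j ↦ IsIterBase G M t z (p j)) m i

theorem IsLastIterBase.even (hM : M.IsMatching) (hG : ∀ s < t, BlossomProperty G M s)
    (h : IsLastIterBase G M t z m p i) (hp : IsAltPath G M m p) (hi : i < m) (hiz : p i ≠ z) :
    Even i := by
  by_contra hodd
  rw [Nat.not_even_iff_odd] at hodd
  exact h.not_of_lt i.lt_succ_self hi (h.prop.of_adj hM hG hiz ((hp.step hi).2.2 hodd))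

/-- The path runs along `s` to `p c`, back along `p` to `p i = e k`, and back along `e` to `z`,
which it reaches with odd parity; the even level of `z` is `ζ`. -/
theorem EntersAt.le_add (h : EntersAt G M t z k e ζ) (he : IsAltPath G M k e) (hek : e k = p i)
    (hp : IsAltPath G M m p) (hs : IsAltPath G M a s) (hi : IsLastIterBase G M t z m p i)
    (hmeet : MeetsFirst s p i m a c) (hac : Odd (a + c)) (hik : Even (i + k))
    (hsz : ∀ x ≤ a, ¬ IsIterBase G M t z (s x)) : t ≤ a + (c - i) + k := by
  have hic := hmeet.le_left
  have hcm := hmeet.le_right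
  have hζk := h.le
  have hmeet' : MeetsFirst (splice s a fun j ↦ p (c - j)) e ζ k (a + (c - i)) k := by
    refine ⟨hζk, le_rfl, by rw [splice_add, Nat.sub_sub_self hic, hek], fun x y hx hy hyk hxy ↦ ?_⟩
    have hyz := h.isIterBase hy hyk
    rw [← hxy] at hyz
    rcases lt_or_ge x a with hxa | hax
    · rw [splice_of_lt hxa] at hyz
      exact hsz x hxa.le hyz
    · rw [splice_of_le hax] at hyz
      exact hi.not_of_lt (by omega) (by omega) hyz
  have hle := hmeet'.tenacity_le (hs.splice_backward hp hmeet hac) he (by grind)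
    h.isLevelPath.toIsAltPath rfl (Even.add_self ζ)
  rw [h.isLevelPath.apply_length] at hle
  have ht := (h.isIterBase le_rfl hζk).le_tenacity.trans hle
  rw [Nat.cast_le] at ht
  omega

theorem EntersAt.lt_of_isLastIterBase (hM : M.IsMatching) (hG : ∀ s < t, BlossomProperty G M s)
    (hp : IsLevelPath G M m p v) (hmn : m + n = t) (hi : IsLastIterBase G M t z m p i)
    (hi_even : Even i) (he : IsLevelPath G M k e (p i)) (hk : Even k) (hki : k < i)
    (h : EntersAt G M t z k e ζ) : n < ζ := by
  obtain ⟨a, hak, c, hmeet⟩ := exists_meetsFirst le_rfl hi.le he.apply_length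
  have hic := hmeet.le_left
  have hcm := hmeet.le_right
  have hea := he.toIsAltPath.mono hak
  have hodd := hmeet.odd_add_of_lt hea hp (by omega)
  have hic' : i < c := by
    refine hic.lt_of_ne fun hic' ↦ ?_
    have := he.inj hak le_rfl (hmeet.eq.trans (hic' ▸ he.apply_length.symm))
    grind
  have haζ : a < ζ := by
    by_contra! hζa
    exact hi.not_of_lt hic' hcm (hmeet.eq ▸ h.isIterBase hζa hak)
  have hle := h.le_add he.toIsAltPath he.apply_length hp.toIsAltPath hea hi hmeet hodd
    (hi_even.add hk) fun x hx hxz ↦ by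
      have := h.le_of_isIterBase hM hG he.toIsAltPath (hx.trans hak) hxz
      omega
  omega

theorem IsLevelPath.not_isIterBase (hM : M.IsMatching) (hG : ∀ s < t, BlossomProperty G M s)
    (hv : tenacity G M v = t) (hzv : z ≠ v) (hr : IsLevelPath G M n r v) (hmn : m + n = t)
    (he : IsLevelPath G M ζ e z) (hζ : Even ζ) (hnζ : n < ζ) (hζm : ζ ≤ m)
    (hz : (t : ℕ∞) ≤ tenacity G M z) (hj : j ≤ n) : ¬ IsIterBase G M t z (r j) := by
  intro hjz
  obtain ⟨l, -, hl⟩ := exists_isLastIndex (P := fun x ↦ IsIterBase G M t z (r x)) hj hjz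
  have hln := hl.lt_of_not (hr.apply_length.symm ▸ not_isIterBase_of_tenacity_eq hv hzv)
  by_cases hlz : r l = z
  · have hinit := hr.isLevelPath_apply (hv ▸ ENat.natCast_ne_top t) hln.le (hlz ▸ hv.trans_le hz)
    rw [hlz] at hinit
    rcases Nat.even_or_odd l with hl_even | hl_odd
    · have := hinit.length_eq he (hl_even.add hζ)
      omega
    · rw [hinit.tenacity_eq he (hl_odd.add_even hζ), Nat.cast_le] at hz
      omega
  · have hl_even := IsLastIterBase.even hM hG hl hr.toIsAltPath hln hlz
    obtain ⟨k, hkl, q, hq, hpar⟩ := (hr.toIsAltPath.mono hln.le).exists_isLevelPath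
    obtain ⟨ζ', hζ'⟩ := hl.prop.exists_entersAt hM hG hq (Or.inl hlz)
    have hζζ' := hζ'.isLevelPath.length_eq he (hζ'.even.add hζ)
    have hζ'k := hζ'.le
    have := hζ'.lt_of_isLastIterBase hM hG hr ((add_comm n m).trans hmn) hl hl_even hq
      ((Nat.even_add.1 hpar).2 hl_even) (by omega)
    omega

theorem IsLastIterBase.le_of_isLevelPath (hM : M.IsMatching)
    (hG : ∀ s < t, BlossomProperty G M s) (hv : tenacity G M v = t) (hzv : z ≠ v)
    (hp : IsLevelPath G M m p v) (hi : IsLastIterBase G M t z m p i) (hi_even : Even i)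
    (hiz : p i ≠ z) (he : IsLevelPath G M k e (p i)) (hk : Even k) : i ≤ k := by
  by_contra! hlt
  obtain ⟨ζ, hζ⟩ := hi.prop.exists_entersAt hM hG he (Or.inl hiz)
  obtain ⟨n, r, hr, -, hmn⟩ := hp.exists_add_eq_tenacity (hv ▸ ENat.natCast_ne_top t)
  rw [hv, Nat.cast_inj] at hmn
  have hnζ := hζ.lt_of_isLastIterBase hM hG hp hmn.symm hi hi_even he hk hlt
  have hζk := hζ.le
  have him := hi.le
  have hr_not {j} (hj : j ≤ n) : ¬ IsIterBase G M t z (r j) :=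
    hr.not_isIterBase hM hG hv hzv hmn.symm hζ.isLevelPath hζ.even hnζ (by omega)
      hi.prop.le_tenacity hj
  obtain ⟨a, han, c, hmeet⟩ :=
    exists_meetsFirst him le_rfl (hr.apply_length.trans hp.apply_length.symm)
  have hic := hmeet.le_left
  have hcm := hmeet.le_right
  have hra := hr.toIsAltPath.mono han
  have hodd := hmeet.odd_add_of_lt hra hp (by omega)
  have hle := hζ.le_add he.toIsAltPath he.apply_length hp.toIsAltPath hra hi hmeet hodd
    (hi_even.add hk) fun x hx ↦ hr_not (hx.trans han)
  omega

theorem IsLastIterBase.isLevelPath (hM : M.IsMatching) (hG : ∀ s < t, BlossomProperty G M s)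
    (hv : tenacity G M v = t) (hzv : z ≠ v) (hp : IsLevelPath G M m p v)
    (hi : IsLastIterBase G M t z m p i) : IsLevelPath G M i p (p i) := by
  by_cases hiz : p i = z
  · exact hp.isLevelPath_apply (hv ▸ ENat.natCast_ne_top t) hi.le
      (hiz ▸ hv.trans_le hi.prop.le_tenacity)
  have him := hi.lt_of_not (hp.apply_length.symm ▸ not_isIterBase_of_tenacity_eq hv hzv)
  have hi_even := hi.even hM hG hp.toIsAltPath him hiz
  have hpi := hp.toIsAltPath.mono him.le
  obtain ⟨k, hki, e, he, hpar⟩ := hpi.exists_isLevelPath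
  have hik := hi.le_of_isLevelPath hM hG hv hzv hp hi_even hiz he (by grind)
  obtain rfl := le_antisymm hki hik
  exact ⟨hpi, rfl, he.level_eq⟩

theorem IsIterBase.exists_entersAt_or_exists_odd (hM : M.IsMatching)
    (hG : ∀ s < t, BlossomProperty G M s) (hv : tenacity G M v = t) (hzv : z ≠ v)
    (hp : IsLevelPath G M m p v) (hcm : c ≤ m) (h : IsIterBase G M t z (p c)) :
    (∃ ζ, EntersAt G M t z c p ζ) ∨ ∃ l, c ≤ l ∧ l < m ∧ Odd l ∧ IsLevelPath G M l p z := by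
  obtain ⟨i, hci, hi⟩ := exists_isLastIndex (P := fun j ↦ IsIterBase G M t z (p j)) hcm h
  have hinit := IsLastIterBase.isLevelPath hM hG hv hzv hp hi
  by_cases hor : p i ≠ z ∨ Even i
  · obtain ⟨ζ, hζ⟩ := hi.prop.exists_entersAt hM hG hinit hor
    exact Or.inl ⟨ζ, hζ.le_of_isIterBase hM hG hinit.toIsAltPath hci h, hζ.even, hζ.isLevelPath,
      fun j hζj hjc ↦ hζ.isIterBase hζj (hjc.trans hci)⟩
  · push Not at hor
    have him := hi.lt_of_not (hp.apply_length.symm ▸ not_isIterBase_of_tenacity_eq hv hzv)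
    exact Or.inr ⟨i, hci, him, Nat.not_even_iff_odd.1 hor.2, hor.1 ▸ hinit⟩

end LastIterBase

section ExistsBase

variable {G : SimpleGraph V} {M : G.Subgraph} {a c i l m n t β γ : ℕ}
  {p r : ℕ → V} {b v z : V}

/-- Every vertex of tenacity `t` with a level path shorter than `K` has a base. This is the
hypothesis of the induction on level within a fixed tenacity. -/
def HasBasesBelow (G : SimpleGraph V) (M : G.Subgraph) (t K : ℕ) : Prop :=
  ∀ ⦃x k q⦄, tenacity G M x = t → IsLevelPath G M k q x → k < K → ∃ b, IsBase G M x b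

theorem IsLastHigh.apply_eq_of_isBase (hβ : IsLastHigh G M t m p β) (hv : tenacity G M v = t)
    (hp : IsLevelPath G M m p v) (hβi : β ≤ i) (him : i ≤ m) (hi : tenacity G M (p i) = t)
    (hb : IsBase G M (p i) b) : p β = b := by
  have hinit := hp.isLevelPath_apply (hv ▸ ENat.natCast_ne_top t) him (hv.trans hi.symm).le
  exact hb.apply_eq hinit (hi.symm ▸ hβ.mono hβi him)

theorem IsLastHigh.exists_apply_eq_of_common (hβ : IsLastHigh G M t m p β)
    (ih : HasBasesBelow G M t (min m n)) (hv : tenacity G M v = t) (hp : IsLevelPath G M m p v)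
    (hr : IsLevelPath G M n r v) (hβi : β ≤ i) (him : i < m) (hln : l < n) (hil : r l = p i)
    (hpar : Even (i + l)) (hi : tenacity G M (p i) = t) : ∃ γ ≤ n, r γ = p β := by
  have hv_ne_top : tenacity G M v ≠ ⊤ := hv ▸ ENat.natCast_ne_top t
  have hpi := hp.isLevelPath_apply hv_ne_top him.le (hv.trans hi.symm).le
  have hrl := hr.isLevelPath_apply hv_ne_top hln.le (hil ▸ (hv.trans hi.symm).le)
  rw [hil] at hrl
  have hlen := hpi.length_eq hrl hpar
  obtain ⟨b, hb⟩ := ih hi hpi (lt_min him (hlen ▸ hln))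
  obtain ⟨γ, hγ, hγb⟩ := isBase_iff.1 hb l r hrl
  exact ⟨γ, hγ.le.trans hln.le,
    hγb.trans (hβ.apply_eq_of_isBase hv hp hβi him.le hi hb).symm⟩

theorem ne_of_isIterBase_of_common (hM : M.IsMatching) (hG : ∀ s < t, BlossomProperty G M s)
    (hp : IsLevelPath G M m p v) (hr : IsLevelPath G M n r v) (hmn : Odd (m + n)) (hcm : c ≤ m)
    (han : a ≤ n) (hac : r a = p c) (hz : IsIterBase G M t z (p c)) (hcz : p c ≠ z) : z ≠ v := by
  rintro rfl
  rcases Nat.even_or_odd m with hm | hm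
  · obtain ⟨ζ, hζ, q, hq, heven⟩ :=
      hz.exists_isLevelPath_lt hM hG hcz (hp.toIsAltPath.mono hcm)
    have := hq.length_eq hp (heven.add hm)
    omega
  · rw [← hac] at hz hcz
    obtain ⟨ζ, hζ, q, hq, heven⟩ :=
      hz.exists_isLevelPath_lt hM hG hcz (hr.toIsAltPath.mono han)
    have := hq.length_eq hr (by grind)
    omega

/-- Both paths visit `z` with the same parity: opposite parities would make its tenacity less than
`m + n = t`. -/
theorem IsIterBase.exists_common (hM : M.IsMatching) (hG : ∀ s < t, BlossomProperty G M s)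
    (hv : tenacity G M v = t) (hzv : z ≠ v) (hp : IsLevelPath G M m p v)
    (hr : IsLevelPath G M n r v) (hmn : m + n = t) (hcm : c ≤ m) (han : a ≤ n)
    (hc : IsIterBase G M t z (p c)) (ha : IsIterBase G M t z (r a)) :
    ∃ i l, IsLevelPath G M i p z ∧ IsLevelPath G M l r z ∧
      (EntersAt G M t z c p i ∧ EntersAt G M t z a r l ∨
        c ≤ i ∧ i < m ∧ l < n ∧ Odd i ∧ Odd l) := by
  have not_odd {x y q s} (hq : IsLevelPath G M x q z) (hs : IsLevelPath G M y s z)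
      (hxy : x + y < t) : ¬ Odd (x + y) := by
    intro hodd
    have ht := hc.le_tenacity
    rw [hq.tenacity_eq hs hodd, Nat.cast_le] at ht
    omega
  rcases hc.exists_entersAt_or_exists_odd hM hG hv hzv hp hcm with
      ⟨i, hi⟩ | ⟨i, hci, him, hi_odd, hi⟩ <;>
    rcases ha.exists_entersAt_or_exists_odd hM hG hv hzv hr han with
      ⟨l, hl⟩ | ⟨l, -, hln, hl_odd, hl⟩
  · exact ⟨i, l, hi.isLevelPath, hl.isLevelPath, Or.inl ⟨hi, hl⟩⟩
  · have := hi.le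
    exact absurd (hi.even.add_odd hl_odd) (not_odd hi.isLevelPath hl (by omega))
  · have := hl.le
    exact absurd (hi_odd.add_even hl.even) (not_odd hi hl.isLevelPath (by omega))
  · exact ⟨i, l, hi, hl, Or.inr ⟨hci, him, hln, hi_odd, hl_odd⟩⟩

theorem IsLastHigh.exists_common_of_tenacity_lt (hM : M.IsMatching)
    (hG : ∀ s < t, BlossomProperty G M s) (hβ : IsLastHigh G M t m p β)
    (hv : tenacity G M v = t) (hp : IsLevelPath G M m p v) (hr : IsLevelPath G M n r v)
    (hmn : Odd (m + n)) (han : a ≤ n) (hmeet : MeetsFirst r p (β + 1) m a c)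
    (hc : tenacity G M (p c) < t) (hno : ∀ γ ≤ n, r γ ≠ p β) :
    ∃ i l, β ≤ i ∧ i < m ∧ l < n ∧ r l = p i ∧ Even (i + l) ∧ tenacity G M (p i) = t := by
  have hβc := hmeet.le_left
  have hcm := hmeet.le_right
  obtain ⟨z, hz⟩ := exists_isIterBase hG (hp.toIsAltPath.mono hcm)
  have hcz : p c ≠ z := by
    rintro rfl
    exact hc.not_ge hz.le_tenacity
  have hzv := ne_of_isIterBase_of_common hM hG hp hr hmn hcm han hmeet.eq hz hcz
  obtain ⟨i, l, hi, hl, h⟩ :=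
    hz.exists_common hM hG hv hzv hp hr (hp.add_eq hv hr hmn) hcm han (hmeet.eq ▸ hz)
  have hli : r l = p i := hl.apply_length.trans hi.apply_length.symm
  rcases h with ⟨hci, hal⟩ | ⟨hci, him, hln, hi_odd, hl_odd⟩
  · have hla : l < a := by
      refine hal.le.lt_of_ne ?_
      rintro rfl
      exact hcz (hmeet.eq.symm.trans hl.apply_length)
    have hβi : β ≤ i :=
      hci.le_of_le_tenacity (hp.toIsAltPath.mono hcm) (by omega) hβ.prop.le
    rcases hβi.eq_or_lt with rfl | hβi
    · exact absurd hli (hno l (by omega))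
    · exact absurd hli (hmeet.ne hla hβi (hci.le.trans hcm))
  · refine ⟨i, l, by omega, him, hln, hli, hi_odd.add_odd hl_odd, ?_⟩
    exact (hβ.tenacity_le (by omega) him.le).antisymm (hi.apply_length ▸ hz.le_tenacity)

theorem IsLastHigh.exists_apply_eq (hM : M.IsMatching) (hG : ∀ s < t, BlossomProperty G M s)
    (hβ : IsLastHigh G M t m p β) (ih : HasBasesBelow G M t (min m n)) (hv : tenacity G M v = t)
    (hp : IsLevelPath G M m p v) (hr : IsLevelPath G M n r v) (hmn : Odd (m + n)) :
    ∃ γ ≤ n, r γ = p β := by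
  have hmnt := hp.add_eq hv hr hmn
  by_contra! hno
  have hβm := hβ.lt (hp.apply_length ▸ hv.le)
  have hend : r n = p m := hr.apply_length.trans hp.apply_length.symm
  obtain ⟨a, han, c, hmeet⟩ := exists_meetsFirst hβm le_rfl hend
  have hβc := hmeet.le_left
  have hcm := hmeet.le_right
  have heven := hβ.even_add_of_meetsFirst hp.toIsAltPath hr.toIsAltPath hmnt han hmeet hno
  have hcm' : c < m := by
    refine hcm.lt_of_ne ?_
    rintro rfl
    have := hr.inj han le_rfl (hmeet.eq.trans hend.symm)
    grind
  have han' : a < n := by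
    refine han.lt_of_ne ?_
    rintro rfl
    have := hp.inj hcm le_rfl (hmeet.eq.symm.trans hend)
    omega
  obtain ⟨i, l, hβi, him, hln, hli, hpar, hi⟩ : ∃ i l, β ≤ i ∧ i < m ∧ l < n ∧ r l = p i ∧
      Even (i + l) ∧ tenacity G M (p i) = t := by
    rcases (hβ.tenacity_le hβc hcm).eq_or_lt with hc | hc
    · exact ⟨c, a, by omega, hcm', han', hmeet.eq, by grind, hc⟩
    · exact hβ.exists_common_of_tenacity_lt hM hG hv hp hr hmn han hmeet hc hno
  obtain ⟨γ, hγ, hγβ⟩ := hβ.exists_apply_eq_of_common ih hv hp hr hβi him hln hli hpar hi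
  exact hno γ hγ hγβ

theorem IsLastHigh.apply_eq_apply (hM : M.IsMatching) (hG : ∀ s < t, BlossomProperty G M s)
    (ih : HasBasesBelow G M t (min m n)) (hv : tenacity G M v = t) (hp : IsLevelPath G M m p v)
    (hr : IsLevelPath G M n r v) (hmn : Odd (m + n)) (hβ : IsLastHigh G M t m p β)
    (hγ : IsLastHigh G M t n r γ) : r γ = p β := by
  have hmnt := hp.add_eq hv hr hmn
  obtain ⟨γ', hγ', hγβ⟩ := hβ.exists_apply_eq hM hG ih hv hp hr hmn
  obtain ⟨β', hβ', hβγ⟩ := hγ.exists_apply_eq hM hG (min_comm m n ▸ ih) hv hr hp (by grind)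
  have hβγ' : β = γ' := hp.eq_of_apply_eq hv hr hmnt hβ.le hγ' hγβ hβ.prop
  have hβ'γ : γ = β' := hr.eq_of_apply_eq hv hp (by omega) hγ.le hβ' hβγ hγ.prop
  have hγ'γ : γ' ≤ γ := not_lt.1 fun hlt ↦ hγ.not_of_lt hlt hγ' (hγβ ▸ hβ.prop)
  have hβ'β : β' ≤ β := not_lt.1 fun hlt ↦ hβ.not_of_lt hlt hβ' (hβγ ▸ hγ.prop)
  obtain rfl : γ' = γ := by omega
  exact hγβ

theorem IsLevelPath.exists_isBase (hM : M.IsMatching) (hG : ∀ s < t, BlossomProperty G M s)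
    (hlm : t < lm G M) (ih : HasBasesBelow G M t (min m n)) (hv : tenacity G M v = t)
    (hp : IsLevelPath G M m p v) (hr : IsLevelPath G M n r v) (hmn : Odd (m + n)) :
    ∃ b, IsBase G M v b := by
  obtain ⟨β, hβ⟩ := exists_isLastHigh hlm hp.toIsAltPath
  obtain ⟨γ, hγ⟩ := exists_isLastHigh hlm hr.toIsAltPath
  have hγβ : r γ = p β := hβ.apply_eq_apply hM hG ih hv hp hr hmn hγ
  refine ⟨p β, isBase_iff.2 fun k q hq ↦ ?_⟩
  rw [hv]
  obtain ⟨δ, hδ⟩ := exists_isLastHigh hlm hq.toIsAltPath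
  refine ⟨δ, hδ, ?_⟩
  rcases Nat.even_or_odd (k + m) with hkm | hkm
  · obtain rfl := hq.length_eq hp hkm
    exact (hδ.apply_eq_apply hM hG ih hv hq hr hmn hγ).symm.trans hγβ
  · obtain rfl := hq.length_eq hr (by grind)
    exact hβ.apply_eq_apply hM hG ih hv hp hq hmn hδ

theorem hasBasesBelow (hM : M.IsMatching) (hG : ∀ s < t, BlossomProperty G M s)
    (hlm : t < lm G M) (K : ℕ) : HasBasesBelow G M t K := by
  induction K with
  | zero => exact fun _ _ _ _ _ hk ↦ absurd hk (Nat.not_lt_zero _)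
  | succ K ih =>
    intro x k q hx hq hk
    obtain ⟨n, r, hr, hkn, -⟩ := hq.exists_add_eq_tenacity (hx ▸ ENat.natCast_ne_top t)
    exact hq.exists_isBase hM hG hlm (fun y l s hy hs hl ↦ ih hy hs (by omega)) hx hr hkn

theorem exists_isBase (hM : M.IsMatching) (hG : ∀ s < t, BlossomProperty G M s)
    (hlm : t < lm G M) (hv : tenacity G M v = t) : ∃ b, IsBase G M v b := by
  obtain ⟨k, q, hq, -⟩ := exists_isLevelPath (hv ▸ ENat.natCast_ne_top t) 0
  exact hasBasesBelow hM hG hlm (k + 1) hv hq k.lt_succ_self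

end ExistsBase

section BlossomProperty

variable {G : SimpleGraph V} {M : G.Subgraph} {c i m t β : ℕ} {p : ℕ → V} {v z : V}

theorem IsIterBase.exists_apply_eq (hM : M.IsMatching) (hG : ∀ s < t, BlossomProperty G M s)
    (hv : tenacity G M v = t) (hp : IsLevelPath G M m p v) (hβ : IsLastHigh G M t m p β)
    (hβc : β ≤ c) (hcm : c ≤ m) (hz : IsIterBase G M t z (p c)) :
    ∃ i, β ≤ i ∧ i ≤ m ∧ p i = z := by
  by_cases hzv : z = v
  · exact ⟨m, hβ.le, le_rfl, hp.apply_length.trans hzv.symm⟩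
  rcases hz.exists_entersAt_or_exists_odd hM hG hv hzv hp hcm with
    ⟨ζ, hζ⟩ | ⟨i, hci, him, -, hi⟩
  · exact ⟨ζ, hζ.le_of_le_tenacity (hp.toIsAltPath.mono hcm) hβc hβ.prop.le, hζ.le.trans hcm,
      hζ.isLevelPath.apply_length⟩
  · exact ⟨i, hβc.trans hci, him.le, hi.apply_length⟩

theorem IsLastHigh.isIterBase (hb : ∀ x, tenacity G M x = t → ∃ b, IsBase G M x b)
    (hv : tenacity G M v = t) (hp : IsLevelPath G M m p v) (hβ : IsLastHigh G M t m p β)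
    (hβi : β ≤ i) (him : i ≤ m) (hi : t ≤ tenacity G M (p i)) :
    IsIterBase G M (t + 1) (p β) (p i) := by
  have hrefl : IsIterBase G M (t + 1) (p β) (p β) :=
    .refl (by exact_mod_cast Order.add_one_le_of_lt hβ.prop)
  rcases hβi.eq_or_lt with rfl | hlt
  · exact hrefl
  have hit : tenacity G M (p i) = t := (hβ.tenacity_le hlt him).antisymm hi
  obtain ⟨b, hb⟩ := hb _ hit
  obtain rfl := hβ.apply_eq_of_isBase hv hp hβi him hit hb
  exact .step (by rw [hit]; exact_mod_cast t.lt_succ_self) hb hrefl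

theorem blossomProperty (hM : M.IsMatching) (hlm : t < lm G M) : BlossomProperty G M t := by
  induction t using Nat.strong_induction_on with
  | _ t ih =>
    have hG : ∀ s < t, BlossomProperty G M s := fun s hs ↦
      ih s hs (lt_trans (by exact_mod_cast hs) hlm)
    have hb : ∀ x, tenacity G M x = t → ∃ b, IsBase G M x b := fun x ↦ exists_isBase hM hG hlm
    refine ⟨hb, fun v m p β hv hp hβ j hβj hjm ↦ ?_⟩
    obtain ⟨z, hz⟩ := exists_isIterBase hG (hp.toIsAltPath.mono hjm)
    obtain ⟨i, hβi, him, rfl⟩ := hz.exists_apply_eq hM hG hv hp hβ hβj hjm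
    exact hz.trans t.le_succ (hβ.isIterBase hb hv hp hβi him hz.le_tenacity)

theorem IsBase.unique {b b' : V} (hv : tenacity G M v ≠ ⊤) (hb : IsBase G M v b)
    (hb' : IsBase G M v b') : b' = b := by
  obtain ⟨m, p, hp, -⟩ := exists_isLevelPath hv 0
  obtain ⟨β, hβ, rfl⟩ := isBase_iff.1 hb m p hp
  exact (hb'.apply_eq hp hβ).symm

end BlossomProperty

/-- The base theorem: a vertex of tenacity `t < l_m` has a unique base, i.e. there is a
unique vertex `b` which, on every `evenlevel(v)` and `oddlevel(v)` path, is the furthest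
vertex of tenacity `> t` from the starting unmatched vertex. -/
theorem stmt3 (G : SimpleGraph V) (M : G.Subgraph) (hM : M.IsMatching)
    (v : V) (t : ℕ∞) (ht : tenacity G M v = t) (hlt : t < lm G M) :
    ∃! b : V, IsBase G M v b := by
  subst ht
  obtain ⟨t, ht⟩ := ENat.ne_top_iff_exists.1 hlt.ne_top
  obtain ⟨b, hb⟩ := (blossomProperty hM (ht.trans_lt hlt)).exists_isBase v ht.symm
  exact ⟨b, hb, fun b' hb' ↦ hb.unique hlt.ne_top hb'⟩

end MV
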